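/- With notation as in the paper, the projection to S³H⊗Λ³E of ω_E• sym^H(ω_H•𝒯(γ₀⊗α₀)) equals −(6(n−1)/(4n−3)) sym^H(hhh̃)⊗(eᵢ∧ẽᵢ∧e₂) − (4(4n²−3n+3)/(4n−3)) sym^H(hhh̃)⊗(e₁∧e₂∧ẽ₁), where the sum over i = 1..2n is implicit. -/

import Mathlib

open scoped BigOperators TensorProduct

/-- wedge of two vectors in the exterior algebra -/
noncomputable def wedge2 {T : Type*} [AddCommGroup T] [Module ℂ T] (x₁ x₂ : T) :
    ExteriorAlgebra ℂ T :=
  ExteriorAlgebra.ι ℂ x₁ * ExteriorAlgebra.ι ℂ x₂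

/-- wedge of three vectors in the exterior algebra -/
noncomputable def wedge3 {T : Type*} [AddCommGroup T] [Module ℂ T] (x₁ x₂ x₃ : T) :
    ExteriorAlgebra ℂ T :=
  ExteriorAlgebra.ι ℂ x₁ * ExteriorAlgebra.ι ℂ x₂ * ExteriorAlgebra.ι ℂ x₃

/-- wedge of four vectors in the exterior algebra -/
noncomputable def wedge4 {T : Type*} [AddCommGroup T] [Module ℂ T] (x₁ x₂ x₃ x₄ : T) :
    ExteriorAlgebra ℂ T :=
  ExteriorAlgebra.ι ℂ x₁ * ExteriorAlgebra.ι ℂ x₂ * ExteriorAlgebra.ι ℂ x₃ *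
    ExteriorAlgebra.ι ℂ x₄

/-- the element `α₀ = e₁h∧e₂h∧Σᵢ eᵢh̃∧ẽᵢh̃ − e₁h̃∧e₂h̃∧Σᵢ eᵢh∧ẽᵢh` -/
noncomputable def alpha0 (n : ℕ) (hn : 2 ≤ n) {E H : Type*}
    [AddCommGroup E] [Module ℂ E] [AddCommGroup H] [Module ℂ H]
    (e te : Fin n ⊕ Fin n → E) (h th : H) : ExteriorAlgebra ℂ (E ⊗[ℂ] H) :=
  (∑ i : Fin n ⊕ Fin n,
      wedge4 (e (Sum.inl ⟨0, by omega⟩) ⊗ₜ h) (e (Sum.inl ⟨1, by omega⟩) ⊗ₜ h)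
        (e i ⊗ₜ th) (te i ⊗ₜ th))
  - ∑ i : Fin n ⊕ Fin n,
      wedge4 (e (Sum.inl ⟨0, by omega⟩) ⊗ₜ th) (e (Sum.inl ⟨1, by omega⟩) ⊗ₜ th)
        (e i ⊗ₜ h) (te i ⊗ₜ h)

/-- the value `𝒯(γ₀⊗α₀)(X) = (4/5)⟨γ₀,X⟩α₀ + (1/5)γ₀∧i_Xα₀ − (1/(4n−3))X∧i_{γ₀}α₀` -/
noncomputable def Tcal (n : ℕ) {E H : Type*}
    [AddCommGroup E] [Module ℂ E] [AddCommGroup H] [Module ℂ H]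
    (B : E ⊗[ℂ] H →ₗ[ℂ] E ⊗[ℂ] H →ₗ[ℂ] ℂ)
    (ic : E ⊗[ℂ] H →ₗ[ℂ]
      ExteriorAlgebra ℂ (E ⊗[ℂ] H) →ₗ[ℂ] ExteriorAlgebra ℂ (E ⊗[ℂ] H))
    (γ0 : E ⊗[ℂ] H) (α0 : ExteriorAlgebra ℂ (E ⊗[ℂ] H)) (X : E ⊗[ℂ] H) :
    ExteriorAlgebra ℂ (E ⊗[ℂ] H) :=
  ((4 : ℂ)/5) • (B γ0 X • α0) + ((1 : ℂ)/5) • (ExteriorAlgebra.ι ℂ γ0 * ic X α0)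
    - ((1 : ℂ)/(4*n - 3)) • (ExteriorAlgebra.ι ℂ X * ic γ0 α0)

/-- the 1-form `𝒯(γ₀⊗α₀)` as an element of `T ⊗ Λ⁴T` via the metric duality
(the dual basis of `{eᵢ⊗h, eᵢ⊗h̃}` is `{ẽᵢ⊗h̃, −ẽᵢ⊗h}`) -/
noncomputable def Xi (n : ℕ) {E H : Type*}
    [AddCommGroup E] [Module ℂ E] [AddCommGroup H] [Module ℂ H]
    (e te : Fin n ⊕ Fin n → E) (h th : H)
    (B : E ⊗[ℂ] H →ₗ[ℂ] E ⊗[ℂ] H →ₗ[ℂ] ℂ)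
    (ic : E ⊗[ℂ] H →ₗ[ℂ]
      ExteriorAlgebra ℂ (E ⊗[ℂ] H) →ₗ[ℂ] ExteriorAlgebra ℂ (E ⊗[ℂ] H))
    (γ0 : E ⊗[ℂ] H) (α0 : ExteriorAlgebra ℂ (E ⊗[ℂ] H)) :
    (E ⊗[ℂ] H) ⊗[ℂ] ExteriorAlgebra ℂ (E ⊗[ℂ] H) :=
  ∑ i : Fin n ⊕ Fin n,
    ((te i ⊗ₜ th) ⊗ₜ Tcal n B ic γ0 α0 (e i ⊗ₜ h)
      - (te i ⊗ₜ h) ⊗ₜ Tcal n B ic γ0 α0 (e i ⊗ₜ th))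

/-- total symmetrization (average) of three vectors in `H⊗H⊗H` -/
noncomputable def sym3 {H : Type*} [AddCommGroup H] [Module ℂ H] (u v w : H) :
    H ⊗[ℂ] (H ⊗[ℂ] H) :=
  ((1:ℂ)/6) • (u ⊗ₜ (v ⊗ₜ w) + u ⊗ₜ (w ⊗ₜ v) + v ⊗ₜ (u ⊗ₜ w)
    + v ⊗ₜ (w ⊗ₜ u) + w ⊗ₜ (u ⊗ₜ v) + w ⊗ₜ (v ⊗ₜ u))

/-- total antisymmetrization of three vectors in `E⊗E⊗E` (the representative of
the 3-vector `x∧y∧z`) -/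
noncomputable def alt3 {E : Type*} [AddCommGroup E] [Module ℂ E] (x y z : E) :
    E ⊗[ℂ] (E ⊗[ℂ] E) :=
  x ⊗ₜ (y ⊗ₜ z) - x ⊗ₜ (z ⊗ₜ y) - y ⊗ₜ (x ⊗ₜ z)
    + y ⊗ₜ (z ⊗ₜ x) + z ⊗ₜ (x ⊗ₜ y) - z ⊗ₜ (y ⊗ₜ x)

/-!
Let `C` be the composite of the contraction with `ω_H`, the symmetrization, the contraction with
`ω_E` and the skew-symmetrization, and let `X_A`, `X^A` be dual bases of `T`.

* By the reproducing formula `Σ ⟨γ, X_A⟩ X^A = γ`, the first term of `𝒯(γ⊗α)` contributes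
  `C(γ⊗α)`. So does the second term `γ∧i_Xα`: the summands of `C` in which the contraction meets
  `γ` reproduce `C(γ⊗α)`, and the others cancel in pairs because `ω_H` and `∧` are skew. The weights
  add up to `4/5 + 1/5 = 1`.
* For the third term, writing `K(z) = Σ eᵢ∧ẽᵢ∧z` and `⌟` for the contraction with `ω_E`, one has
  `C(Σ X^A ⊗ X_A∧b₁d₁∧b₂d₂∧b₃d₃) = sym(d₁d₂d₃)⊗(3 K(⌟(b₁∧b₂∧b₃)) − 6 b₁∧b₂∧b₃)`, where `3` is
  `dim H + 1`.

With `C(γ₀⊗α₀) = −4n sym(hhh̃)⊗e₁∧e₂∧ẽ₁`, and the trace of `i_γ₀α₀` equal to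
`sym(hhh̃)⊗(6(n−1) K(e₂) + 12 e₁∧e₂∧ẽ₁)`, the coefficient of `e₁∧e₂∧ẽ₁` is
`−4n − 12/(4n−3) = −4(4n²−3n+3)/(4n−3)`.
-/

section SymAlt

variable {E H ι : Type*} [AddCommGroup E] [Module ℂ E] [AddCommGroup H] [Module ℂ H]

theorem alt3_rotate (x y z : E) : alt3 y z x = alt3 x y z := by
  unfold alt3; abel

theorem alt3_swap (x y z : E) : alt3 y x z = -alt3 x y z := by
  unfold alt3; abel

/-- The 3-vector `x∧y∧z` as a linear function of `z`. -/
noncomputable def alt3Hom (x y : E) : E →ₗ[ℂ] E ⊗[ℂ] (E ⊗[ℂ] E) where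
  toFun := alt3 x y
  map_add' z z' := by
    simp only [alt3, TensorProduct.tmul_add, TensorProduct.add_tmul]; abel
  map_smul' c z := by
    simp only [alt3, TensorProduct.tmul_smul, ← TensorProduct.smul_tmul', RingHom.id_apply]
    module

theorem alt3_smul (c : ℂ) (x y z : E) : alt3 x y (c • z) = c • alt3 x y z :=
  map_smul (alt3Hom x y) c z

theorem alt3_neg (x y z : E) : alt3 x y (-z) = -alt3 x y z :=
  map_neg (alt3Hom x y) z

theorem alt3_sum [Fintype ι] (x y : E) (z : ι → E) :
    alt3 x y (∑ i, z i) = ∑ i, alt3 x y (z i) :=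
  map_sum (alt3Hom x y) z Finset.univ

theorem sum_smul_alt3 [Fintype ι] (c : ι → ℂ) (x z : E) (y : ι → E) :
    ∑ i, c i • alt3 x (y i) z = alt3 x (∑ i, c i • y i) z := by
  simp only [alt3_rotate z x, alt3_sum, alt3_smul]

theorem sym3_rotate (u v w : H) : sym3 v w u = sym3 u v w := by
  unfold sym3; congr 1; abel

theorem sym3_swap (u v w : H) : sym3 v u w = sym3 u v w := by
  unfold sym3; congr 1; abel

/-- The symmetrization of `u⊗v⊗w` as a linear function of `u`. -/
noncomputable def sym3Hom (v w : H) : H →ₗ[ℂ] H ⊗[ℂ] (H ⊗[ℂ] H) where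
  toFun u := sym3 u v w
  map_add' u u' := by
    simp only [sym3, TensorProduct.tmul_add, TensorProduct.add_tmul]; module
  map_smul' c u := by
    simp only [sym3, TensorProduct.tmul_smul, ← TensorProduct.smul_tmul', RingHom.id_apply]
    module

theorem sum_smul_sym3 [Fintype ι] (c : ι → ℂ) (u : ι → H) (v w : H) :
    ∑ i, c i • sym3 (u i) v w = sym3 (∑ i, c i • u i) v w := by
  change ∑ i, c i • sym3Hom v w (u i) = sym3Hom v w (∑ i, c i • u i)
  rw [map_sum]
  simp only [map_smul]

theorem sum_sum_smul_tmul {κ : Type*} [Fintype ι] [Fintype κ] (c : κ → ℂ) (s : κ → H)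
    (t : ι → E) : ∑ i, ∑ k, c k • (s k ⊗ₜ[ℂ] t i) = (∑ k, c k • s k) ⊗ₜ[ℂ] ∑ i, t i := by
  simp only [TensorProduct.tmul_sum, TensorProduct.sum_tmul, TensorProduct.smul_tmul']

end SymAlt

section Contraction

variable {E : Type*} [AddCommGroup E] [Module ℂ E] {ω : E →ₗ[ℂ] E →ₗ[ℂ] ℂ}

/-- The contraction of the 3-vector `x∧y∧z` with the 2-form `ω`. -/
noncomputable def contract3 (ω : E →ₗ[ℂ] E →ₗ[ℂ] ℂ) (x y z : E) : E :=
  ω x y • z - ω x z • y + ω y z • x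

theorem contract3_rotate (hω : ∀ u v, ω u v = -ω v u) (x y z : E) :
    contract3 ω y z x = contract3 ω x y z := by
  simp only [contract3, hω y x, hω z x]; module

theorem contract3_swap (hω : ∀ u v, ω u v = -ω v u) (x y z : E) :
    contract3 ω y x z = -contract3 ω x y z := by
  simp only [contract3, hω y x]; module

theorem alt3_contract3 (x y a b c : E) :
    alt3 x y (contract3 ω a b c)
      = ω a b • alt3 x y c - ω a c • alt3 x y b + ω b c • alt3 x y a := by
  change alt3Hom x y (contract3 ω a b c) = _
  simp only [contract3, map_add, map_sub, map_smul]
  rfl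

end Contraction

section AltTrace

variable {E ι : Type*} [AddCommGroup E] [Module ℂ E] [Fintype ι]

/-- The 3-vector `Σᵢ eᵢ∧ẽᵢ∧z`. -/
noncomputable def altTrace (e te : ι → E) (z : E) : E ⊗[ℂ] (E ⊗[ℂ] E) :=
  ∑ i, alt3 (e i) (te i) z

theorem altTrace_smul (e te : ι → E) (c : ℂ) (z : E) :
    altTrace e te (c • z) = c • altTrace e te z := by
  simp only [altTrace, alt3_smul, Finset.smul_sum]

theorem altTrace_sum {κ : Type*} [Fintype κ] (e te : ι → E) (z : κ → E) :
    altTrace e te (∑ k, z k) = ∑ k, altTrace e te (z k) := by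
  simp only [altTrace, alt3_sum]
  exact Finset.sum_comm

theorem sum_alt3_self_dual (e te : ι → E) (z : E) :
    ∑ i, alt3 z (e i) (te i) = altTrace e te z :=
  Finset.sum_congr rfl fun i _ => (alt3_rotate z (e i) (te i)).symm

theorem sum_alt3_dual_self (e te : ι → E) (z : E) :
    ∑ i, alt3 (te i) (e i) z = -altTrace e te z := by
  simp only [altTrace, alt3_swap (e _) (te _), Finset.sum_neg_distrib]

theorem altTrace_contract3 (ω : E →ₗ[ℂ] E →ₗ[ℂ] ℂ) (e te : ι → E) (x y z : E) :
    altTrace e te (contract3 ω x y z)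
      = ω x y • altTrace e te z - ω x z • altTrace e te y + ω y z • altTrace e te x := by
  simp only [altTrace, alt3_contract3, Finset.sum_add_distrib, Finset.sum_sub_distrib,
    Finset.smul_sum]

end AltTrace

section Frame

variable {E ι : Type*} [AddCommGroup E] [Module ℂ E] [DecidableEq ι]

/-- Two families with the same span that are dual to each other for a skew form `ω`.
They need not span the ambient space, so reproducing formulas hold on their common span. -/
structure IsDualFrame (ω : E →ₗ[ℂ] E →ₗ[ℂ] ℂ) (e te : ι → E) : Prop where
  skew : ∀ u v, ω u v = -ω v u
  apply_dual : ∀ i j, ω (e i) (te j) = if i = j then 1 else 0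
  span_dual : Submodule.span ℂ (Set.range te) = Submodule.span ℂ (Set.range e)

namespace IsDualFrame

variable {ω : E →ₗ[ℂ] E →ₗ[ℂ] ℂ} {e te : ι → E} (F : IsDualFrame ω e te)
include F

theorem dual_mem_span (i : ι) : te i ∈ Submodule.span ℂ (Set.range e) :=
  F.span_dual ▸ Submodule.subset_span ⟨i, rfl⟩

variable [Fintype ι]

theorem sum_apply_smul_dual {b : E} (hb : b ∈ Submodule.span ℂ (Set.range e)) :
    ∑ i, ω (e i) b • te i = b := by
  let proj : E →ₗ[ℂ] E := ∑ i, (ω (e i)).smulRight (te i)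
  have on_dual : Set.EqOn proj (LinearMap.id : E →ₗ[ℂ] E) (Set.range te) := by
    rintro _ ⟨j, rfl⟩
    simp [proj, F.apply_dual]
  simpa [proj] using LinearMap.eqOn_span on_dual (F.span_dual ▸ hb)

theorem sum_apply_dual_smul {b : E} (hb : b ∈ Submodule.span ℂ (Set.range e)) :
    ∑ i, ω b (te i) • e i = b := by
  let proj : E →ₗ[ℂ] E := ∑ i, (ω.flip (te i)).smulRight (e i)
  have on_frame : Set.EqOn proj (LinearMap.id : E →ₗ[ℂ] E) (Set.range e) := by
    rintro _ ⟨j, rfl⟩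
    simp [proj, F.apply_dual]
  simpa [proj] using LinearMap.eqOn_span on_frame hb

theorem sum_apply_frame_smul_dual {b : E} (hb : b ∈ Submodule.span ℂ (Set.range e)) :
    ∑ i, ω b (e i) • te i = -b := by
  simp only [F.skew b, neg_smul, Finset.sum_neg_distrib, F.sum_apply_smul_dual hb]

theorem sum_apply_dual_self : ∑ i, ω (te i) (e i) = -(Fintype.card ι : ℂ) := by
  simp [F.skew (te _), F.apply_dual]

theorem sum_contract3 {b : E} (hb : b ∈ Submodule.span ℂ (Set.range e)) :
    ∑ i, contract3 ω b (e i) (te i) = ((Fintype.card ι : ℂ) - 2) • b := by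
  simp only [contract3, Finset.sum_add_distrib, Finset.sum_sub_distrib,
    F.sum_apply_frame_smul_dual hb, F.sum_apply_dual_smul hb, F.apply_dual, if_true,
    Finset.sum_const, Finset.card_univ, ← Nat.cast_smul_eq_nsmul ℂ]
  module

variable {a b : E} (ha : a ∈ Submodule.span ℂ (Set.range e))
  (hb : b ∈ Submodule.span ℂ (Set.range e)) (p : E)
include ha hb

theorem sum_alt3_contract3_dual :
    ∑ i, alt3 p (e i) (contract3 ω a b (te i))
      = ω a b • altTrace e te p - (2 : ℂ) • alt3 p a b := by
  have slot (q c : E) (hc : c ∈ Submodule.span ℂ (Set.range e)) :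
      ∑ i, ω c (te i) • alt3 p (e i) q = alt3 p c q := by
    rw [sum_smul_alt3, F.sum_apply_dual_smul hc]
  simp only [alt3_contract3, Finset.sum_add_distrib, Finset.sum_sub_distrib, ← Finset.smul_sum,
    slot _ _ ha, slot _ _ hb, sum_alt3_self_dual]
  rw [← alt3_rotate p b a, alt3_swap a b p, alt3_rotate p a b]
  module

theorem sum_alt3_dual_contract3 :
    ∑ i, alt3 p (te i) (contract3 ω a b (e i))
      = (2 : ℂ) • alt3 p a b - ω a b • altTrace e te p := by
  have slot (q c : E) (hc : c ∈ Submodule.span ℂ (Set.range e)) :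
      ∑ i, ω c (e i) • alt3 p (te i) q = -alt3 p c q := by
    rw [sum_smul_alt3, F.sum_apply_frame_smul_dual hc, alt3_rotate q p, alt3_neg,
      ← alt3_rotate q p c]
  have trace : ∑ i, alt3 p (te i) (e i) = -altTrace e te p := by
    rw [← sum_alt3_dual_self]
    exact Finset.sum_congr rfl fun i _ => (alt3_rotate p (te i) (e i)).symm
  simp only [alt3_contract3, Finset.sum_add_distrib, Finset.sum_sub_distrib, ← Finset.smul_sum,
    slot _ _ ha, slot _ _ hb, trace]
  rw [← alt3_rotate p b a, alt3_swap a b p, alt3_rotate p a b]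
  module

theorem sum_dual_alt3_contract3 :
    ∑ i, alt3 (te i) p (contract3 ω (e i) a b)
      = ω a b • altTrace e te p - (2 : ℂ) • alt3 p a b := by
  simp only [alt3_swap p (te _), ← contract3_rotate F.skew (e _) a b, Finset.sum_neg_distrib,
    F.sum_alt3_dual_contract3 ha hb p, neg_sub]

end IsDualFrame

end Frame

section MetricDual

variable {E H N ι κ : Type*} [AddCommGroup E] [Module ℂ E] [AddCommGroup H] [Module ℂ H]
  [AddCommGroup N] [Module ℂ N] [Fintype ι] [Fintype κ]

/-- The element `Σ (ẽᵢ⊗f̃ₖ)⊗Φ(eᵢ⊗fₖ)` of `T⊗N` that represents a 1-form `Φ : T → N` by metric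
duality on `T = E⊗H`, as a linear function of `Φ`. -/
noncomputable def metricDual (e te : ι → E) (f tf : κ → H) :
    (E ⊗[ℂ] H → N) →ₗ[ℂ] (E ⊗[ℂ] H) ⊗[ℂ] N :=
  ∑ i, ∑ k, TensorProduct.mk ℂ _ _ (te i ⊗ₜ tf k) ∘ₗ LinearMap.proj (e i ⊗ₜ f k)

theorem metricDual_apply (e te : ι → E) (f tf : κ → H) (Φ : E ⊗[ℂ] H → N) :
    metricDual e te f tf Φ = ∑ i, ∑ k, (te i ⊗ₜ tf k) ⊗ₜ Φ (e i ⊗ₜ f k) := by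
  simp [metricDual]

/-- The map `w ↦ Σ (ẽᵢ⊗f̃ₖ)⊗((eᵢ⊗fₖ)∧w)`. -/
noncomputable def wedgeDual (e te : ι → E) (f tf : κ → H) :
    ExteriorAlgebra ℂ (E ⊗[ℂ] H) →ₗ[ℂ] (E ⊗[ℂ] H) ⊗[ℂ] ExteriorAlgebra ℂ (E ⊗[ℂ] H) :=
  metricDual e te f tf ∘ₗ LinearMap.pi fun X => LinearMap.mulLeft ℂ (ExteriorAlgebra.ι ℂ X)

theorem wedgeDual_apply (e te : ι → E) (f tf : κ → H) (w : ExteriorAlgebra ℂ (E ⊗[ℂ] H)) :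
    wedgeDual e te f tf w
      = ∑ i, ∑ k, (te i ⊗ₜ tf k) ⊗ₜ (ExteriorAlgebra.ι ℂ (e i ⊗ₜ f k) * w) :=
  metricDual_apply e te f tf _

/-- The map `α ↦ Σ (ẽᵢ⊗f̃ₖ)⊗(γ∧i_{eᵢ⊗fₖ}α)`. -/
noncomputable def interiorDual (e te : ι → E) (f tf : κ → H)
    (ic : E ⊗[ℂ] H →ₗ[ℂ] ExteriorAlgebra ℂ (E ⊗[ℂ] H) →ₗ[ℂ] ExteriorAlgebra ℂ (E ⊗[ℂ] H))
    (γ : E ⊗[ℂ] H) :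
    ExteriorAlgebra ℂ (E ⊗[ℂ] H) →ₗ[ℂ] (E ⊗[ℂ] H) ⊗[ℂ] ExteriorAlgebra ℂ (E ⊗[ℂ] H) :=
  metricDual e te f tf ∘ₗ
    LinearMap.pi fun X => LinearMap.mulLeft ℂ (ExteriorAlgebra.ι ℂ γ) ∘ₗ ic X

theorem interiorDual_apply (e te : ι → E) (f tf : κ → H)
    (ic : E ⊗[ℂ] H →ₗ[ℂ] ExteriorAlgebra ℂ (E ⊗[ℂ] H) →ₗ[ℂ] ExteriorAlgebra ℂ (E ⊗[ℂ] H))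
    (γ : E ⊗[ℂ] H) (α : ExteriorAlgebra ℂ (E ⊗[ℂ] H)) :
    interiorDual e te f tf ic γ α
      = metricDual e te f tf (fun X => ExteriorAlgebra.ι ℂ γ * ic X α) :=
  rfl

theorem metricDual_Tcal (n : ℕ) (e te : ι → E) (f tf : κ → H)
    (B : E ⊗[ℂ] H →ₗ[ℂ] E ⊗[ℂ] H →ₗ[ℂ] ℂ)
    (ic : E ⊗[ℂ] H →ₗ[ℂ] ExteriorAlgebra ℂ (E ⊗[ℂ] H) →ₗ[ℂ] ExteriorAlgebra ℂ (E ⊗[ℂ] H))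
    (γ : E ⊗[ℂ] H) (α : ExteriorAlgebra ℂ (E ⊗[ℂ] H)) :
    metricDual e te f tf (Tcal n B ic γ α)
      = ((4 : ℂ) / 5) • metricDual e te f tf (fun X => B γ X • α)
        + ((1 : ℂ) / 5) • interiorDual e te f tf ic γ α
        - ((1 : ℂ) / (4 * n - 3)) • wedgeDual e te f tf (ic γ α) := by
  have expand : Tcal n B ic γ α = ((4 : ℂ) / 5) • (fun X => B γ X • α)
      + ((1 : ℂ) / 5) • (fun X => ExteriorAlgebra.ι ℂ γ * ic X α)
      - ((1 : ℂ) / (4 * n - 3)) • fun X => ExteriorAlgebra.ι ℂ X * ic γ α := rfl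
  rw [expand]
  simp only [map_add, map_sub, map_smul]
  rfl

variable [DecidableEq ι] [DecidableEq κ] {ωE : E →ₗ[ℂ] E →ₗ[ℂ] ℂ} {ωH : H →ₗ[ℂ] H →ₗ[ℂ] ℂ}
  {e te : ι → E} {f tf : κ → H}

theorem metricDual_pairing_smul (FE : IsDualFrame ωE e te) (FH : IsDualFrame ωH f tf)
    {B : E ⊗[ℂ] H →ₗ[ℂ] E ⊗[ℂ] H →ₗ[ℂ] ℂ}
    (hB : ∀ (a b : E) (c d : H), B (a ⊗ₜ c) (b ⊗ₜ d) = ωE a b * ωH c d)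
    {b : E} (hb : b ∈ Submodule.span ℂ (Set.range e))
    {d : H} (hd : d ∈ Submodule.span ℂ (Set.range f)) (w : N) :
    metricDual e te f tf (fun X => B X (b ⊗ₜ d) • w) = (b ⊗ₜ d) ⊗ₜ w := by
  conv_rhs => rw [← FE.sum_apply_smul_dual hb, ← FH.sum_apply_smul_dual hd]
  simp only [metricDual_apply, hB, TensorProduct.sum_tmul, TensorProduct.tmul_sum,
    TensorProduct.tmul_smul, ← TensorProduct.smul_tmul', mul_smul, Finset.smul_sum]
  rw [Finset.sum_comm]
  exact Finset.sum_congr rfl fun k _ => Finset.sum_congr rfl fun i _ => smul_comm _ _ _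

end MetricDual

section FourVectors

variable {E H : Type*} [AddCommGroup E] [Module ℂ E] [AddCommGroup H] [Module ℂ H]

/-- The 4-vectors in `Λ⁴(V⊗W)`, as a subspace of the exterior algebra of `E⊗H`. -/
noncomputable def fourVectors (V : Submodule ℂ E) (W : Submodule ℂ H) :
    Submodule ℂ (ExteriorAlgebra ℂ (E ⊗[ℂ] H)) :=
  Submodule.span ℂ (Set.range fun x : (Fin 4 → V) × (Fin 4 → W) =>
    wedge4 ((x.1 0 : E) ⊗ₜ (x.2 0 : H)) ((x.1 1 : E) ⊗ₜ (x.2 1 : H))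
      ((x.1 2 : E) ⊗ₜ (x.2 2 : H)) ((x.1 3 : E) ⊗ₜ (x.2 3 : H)))

theorem wedge4_mem_fourVectors {V : Submodule ℂ E} {W : Submodule ℂ H} {a₁ a₂ a₃ a₄ : E}
    {c₁ c₂ c₃ c₄ : H} (ha₁ : a₁ ∈ V) (ha₂ : a₂ ∈ V) (ha₃ : a₃ ∈ V) (ha₄ : a₄ ∈ V)
    (hc₁ : c₁ ∈ W) (hc₂ : c₂ ∈ W) (hc₃ : c₃ ∈ W) (hc₄ : c₄ ∈ W) :
    wedge4 (a₁ ⊗ₜ[ℂ] c₁) (a₂ ⊗ₜ[ℂ] c₂) (a₃ ⊗ₜ[ℂ] c₃) (a₄ ⊗ₜ[ℂ] c₄) ∈ fourVectors V W :=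
  Submodule.subset_span ⟨(![⟨a₁, ha₁⟩, ⟨a₂, ha₂⟩, ⟨a₃, ha₃⟩, ⟨a₄, ha₄⟩],
    ![⟨c₁, hc₁⟩, ⟨c₂, hc₂⟩, ⟨c₃, hc₃⟩, ⟨c₄, hc₄⟩]), rfl⟩

theorem ι_mul_wedge3 {T : Type*} [AddCommGroup T] [Module ℂ T] (x x₁ x₂ x₃ : T) :
    ExteriorAlgebra.ι ℂ x * wedge3 x₁ x₂ x₃ = wedge4 x x₁ x₂ x₃ := by
  simp only [wedge3, wedge4, mul_assoc]

/-- `ic γ` acts on decomposable 4-vectors as the interior product with `B γ`. -/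
def IsInteriorProduct {T : Type*} [AddCommGroup T] [Module ℂ T] (B : T →ₗ[ℂ] T →ₗ[ℂ] ℂ)
    (ic : T →ₗ[ℂ] ExteriorAlgebra ℂ T →ₗ[ℂ] ExteriorAlgebra ℂ T) : Prop :=
  ∀ γ x₁ x₂ x₃ x₄ : T, ic γ (wedge4 x₁ x₂ x₃ x₄)
    = B γ x₁ • wedge3 x₂ x₃ x₄ - B γ x₂ • wedge3 x₁ x₃ x₄
      + B γ x₃ • wedge3 x₁ x₂ x₄ - B γ x₄ • wedge3 x₁ x₂ x₃

theorem interiorDual_wedge4 {ι κ : Type*} [Fintype ι] [Fintype κ] [DecidableEq ι]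
    [DecidableEq κ] {ωE : E →ₗ[ℂ] E →ₗ[ℂ] ℂ} {ωH : H →ₗ[ℂ] H →ₗ[ℂ] ℂ}
    {e te : ι → E} {f tf : κ → H} (FE : IsDualFrame ωE e te) (FH : IsDualFrame ωH f tf)
    {B : E ⊗[ℂ] H →ₗ[ℂ] E ⊗[ℂ] H →ₗ[ℂ] ℂ}
    (hB : ∀ (a b : E) (c d : H), B (a ⊗ₜ c) (b ⊗ₜ d) = ωE a b * ωH c d)
    {ic : E ⊗[ℂ] H →ₗ[ℂ] ExteriorAlgebra ℂ (E ⊗[ℂ] H) →ₗ[ℂ] ExteriorAlgebra ℂ (E ⊗[ℂ] H)}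
    (hic : IsInteriorProduct B ic) (γ : E ⊗[ℂ] H)
    (a : Fin 4 → Submodule.span ℂ (Set.range e)) (c : Fin 4 → Submodule.span ℂ (Set.range f))
    {x : Fin 4 → E ⊗[ℂ] H} (hx : ∀ m, x m = (a m : E) ⊗ₜ (c m : H)) :
    interiorDual e te f tf ic γ (wedge4 (x 0) (x 1) (x 2) (x 3))
      = x 0 ⊗ₜ wedge4 γ (x 1) (x 2) (x 3) - x 1 ⊗ₜ wedge4 γ (x 0) (x 2) (x 3)
        + x 2 ⊗ₜ wedge4 γ (x 0) (x 1) (x 3) - x 3 ⊗ₜ wedge4 γ (x 0) (x 1) (x 2) := by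
  have reproduce (m : Fin 4) (w : ExteriorAlgebra ℂ (E ⊗[ℂ] H)) :
      metricDual e te f tf (fun X => B X (x m) • w) = x m ⊗ₜ w := by
    simpa only [hx] using metricDual_pairing_smul FE FH hB (a m).2 (c m).2 w
  simp only [interiorDual_apply, ← reproduce, ← map_add, ← map_sub]
  congr 1
  ext X
  simp only [hic X, Pi.add_apply, Pi.sub_apply, mul_add, mul_sub, Algebra.mul_smul_comm,
    ι_mul_wedge3]

end FourVectors

section SymAltContraction

variable {E H ι κ : Type*} [AddCommGroup E] [Module ℂ E] [AddCommGroup H] [Module ℂ H]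
  {ωE : E →ₗ[ℂ] E →ₗ[ℂ] ℂ} {ωH : H →ₗ[ℂ] H →ₗ[ℂ] ℂ}

/-- `C` is the map `T⊗Λ⁴T → S³H⊗Λ³E` that contracts the first two `H`-variables with `ωH`,
symmetrizes the other three, contracts the last three `E`-variables with `ωE` and
skew-symmetrizes the remaining ones. -/
def IsSymAltContraction (ωE : E →ₗ[ℂ] E →ₗ[ℂ] ℂ) (ωH : H →ₗ[ℂ] H →ₗ[ℂ] ℂ)
    (C : (E ⊗[ℂ] H) ⊗[ℂ] ExteriorAlgebra ℂ (E ⊗[ℂ] H) →ₗ[ℂ]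
      (H ⊗[ℂ] (H ⊗[ℂ] H)) ⊗[ℂ] (E ⊗[ℂ] (E ⊗[ℂ] E))) : Prop :=
  ∀ (a₀ a₁ a₂ a₃ a₄ : E) (c₀ c₁ c₂ c₃ c₄ : H),
    C ((a₀ ⊗ₜ c₀) ⊗ₜ wedge4 (a₁ ⊗ₜ c₁) (a₂ ⊗ₜ c₂) (a₃ ⊗ₜ c₃) (a₄ ⊗ₜ c₄))
      = ωH c₀ c₁ • (sym3 c₂ c₃ c₄ ⊗ₜ alt3 a₀ a₁ (contract3 ωE a₂ a₃ a₄))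
      - ωH c₀ c₂ • (sym3 c₁ c₃ c₄ ⊗ₜ alt3 a₀ a₂ (contract3 ωE a₁ a₃ a₄))
      + ωH c₀ c₃ • (sym3 c₁ c₂ c₄ ⊗ₜ alt3 a₀ a₃ (contract3 ωE a₁ a₂ a₄))
      - ωH c₀ c₄ • (sym3 c₁ c₂ c₃ ⊗ₜ alt3 a₀ a₄ (contract3 ωE a₁ a₂ a₃))

section Composite

variable
  {G3 : E ⊗[ℂ] (E ⊗[ℂ] ((H ⊗[ℂ] (H ⊗[ℂ] H)) ⊗[ℂ] (E ⊗[ℂ] (E ⊗[ℂ] E)))) →ₗ[ℂ]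
    E ⊗[ℂ] (E ⊗[ℂ] ((H ⊗[ℂ] (H ⊗[ℂ] H)) ⊗[ℂ] E))}
  (hG3 : ∀ (a a' x y z : E) (u v w : H),
    G3 (a ⊗ₜ (a' ⊗ₜ ((u ⊗ₜ (v ⊗ₜ w)) ⊗ₜ (x ⊗ₜ (y ⊗ₜ z)))))
      = a ⊗ₜ (a' ⊗ₜ ((u ⊗ₜ (v ⊗ₜ w)) ⊗ₜ contract3 ωE x y z)))
  {G4 : E ⊗[ℂ] (E ⊗[ℂ] ((H ⊗[ℂ] (H ⊗[ℂ] H)) ⊗[ℂ] E)) →ₗ[ℂ]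
    (H ⊗[ℂ] (H ⊗[ℂ] H)) ⊗[ℂ] (E ⊗[ℂ] (E ⊗[ℂ] E))}
  (hG4 : ∀ (a a' z : E) (u v w : H),
    G4 (a ⊗ₜ (a' ⊗ₜ ((u ⊗ₜ (v ⊗ₜ w)) ⊗ₜ z)))
      = (u ⊗ₜ (v ⊗ₜ w)) ⊗ₜ (((1 : ℂ) / 6) • alt3 a a' z))
include hG3 hG4

theorem skewProj_contract_tmul (a a' x y z : E) (s : H ⊗[ℂ] (H ⊗[ℂ] H)) :
    G4 (G3 (a ⊗ₜ (a' ⊗ₜ (s ⊗ₜ (x ⊗ₜ (y ⊗ₜ z))))))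
      = s ⊗ₜ (((1 : ℂ) / 6) • alt3 a a' (contract3 ωE x y z)) := by
  have on_pure : G4 ∘ₗ G3 ∘ₗ TensorProduct.mk ℂ _ _ a ∘ₗ TensorProduct.mk ℂ _ _ a' ∘ₗ
        (TensorProduct.mk ℂ _ _).flip (x ⊗ₜ (y ⊗ₜ z))
      = (TensorProduct.mk ℂ _ _).flip (((1 : ℂ) / 6) • alt3 a a' (contract3 ωE x y z)) := by
    ext u v w
    exact (congrArg G4 (hG3 a a' x y z u v w)).trans (hG4 a a' _ u v w)
  exact LinearMap.congr_fun on_pure s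

/-- The six terms of `alt3` contribute equally, which cancels the factor `1/6`. -/
theorem skewProj_contract_alt3 (hωE : ∀ u v, ωE u v = -ωE v u) (a a' x y z : E)
    (s : H ⊗[ℂ] (H ⊗[ℂ] H)) :
    G4 (G3 (a ⊗ₜ (a' ⊗ₜ (s ⊗ₜ alt3 x y z)))) = s ⊗ₜ alt3 a a' (contract3 ωE x y z) := by
  have rotate := contract3_rotate hωE
  have hyxz := contract3_swap hωE x y z
  have hxzy := (rotate y x z).trans hyxz
  have hzyx := (rotate x z y).trans hxzy
  rw [alt3]
  simp only [TensorProduct.tmul_add, TensorProduct.tmul_sub, map_add, map_sub,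
    skewProj_contract_tmul hG3 hG4, rotate x y z, (rotate z x y).symm, hxzy, hyxz, hzyx,
    alt3_neg, smul_neg, TensorProduct.tmul_neg, TensorProduct.tmul_smul]
  module

theorem isSymAltContraction_comp (hωE : ∀ u v, ωE u v = -ωE v u)
    {G1 : (E ⊗[ℂ] H) ⊗[ℂ] ExteriorAlgebra ℂ (E ⊗[ℂ] H) →ₗ[ℂ]
      E ⊗[ℂ] (E ⊗[ℂ] ExteriorAlgebra ℂ (E ⊗[ℂ] H))}
    (hG1 : ∀ (a₀ a₁ a₂ a₃ a₄ : E) (c₀ c₁ c₂ c₃ c₄ : H),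
      G1 ((a₀ ⊗ₜ c₀) ⊗ₜ wedge4 (a₁ ⊗ₜ c₁) (a₂ ⊗ₜ c₂) (a₃ ⊗ₜ c₃) (a₄ ⊗ₜ c₄))
        = ωH c₀ c₁ • (a₀ ⊗ₜ (a₁ ⊗ₜ wedge3 (a₂ ⊗ₜ c₂) (a₃ ⊗ₜ c₃) (a₄ ⊗ₜ c₄)))
        - ωH c₀ c₂ • (a₀ ⊗ₜ (a₂ ⊗ₜ wedge3 (a₁ ⊗ₜ c₁) (a₃ ⊗ₜ c₃) (a₄ ⊗ₜ c₄)))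
        + ωH c₀ c₃ • (a₀ ⊗ₜ (a₃ ⊗ₜ wedge3 (a₁ ⊗ₜ c₁) (a₂ ⊗ₜ c₂) (a₄ ⊗ₜ c₄)))
        - ωH c₀ c₄ • (a₀ ⊗ₜ (a₄ ⊗ₜ wedge3 (a₁ ⊗ₜ c₁) (a₂ ⊗ₜ c₂) (a₃ ⊗ₜ c₃))))
    {G2 : E ⊗[ℂ] (E ⊗[ℂ] ExteriorAlgebra ℂ (E ⊗[ℂ] H)) →ₗ[ℂ]
      E ⊗[ℂ] (E ⊗[ℂ] ((H ⊗[ℂ] (H ⊗[ℂ] H)) ⊗[ℂ] (E ⊗[ℂ] (E ⊗[ℂ] E))))}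
    (hG2 : ∀ (a a' b₁ b₂ b₃ : E) (d₁ d₂ d₃ : H),
      G2 (a ⊗ₜ (a' ⊗ₜ wedge3 (b₁ ⊗ₜ d₁) (b₂ ⊗ₜ d₂) (b₃ ⊗ₜ d₃)))
        = a ⊗ₜ (a' ⊗ₜ (sym3 d₁ d₂ d₃ ⊗ₜ alt3 b₁ b₂ b₃))) :
    IsSymAltContraction ωE ωH (G4 ∘ₗ G3 ∘ₗ G2 ∘ₗ G1) := by
  intro a₀ a₁ a₂ a₃ a₄ c₀ c₁ c₂ c₃ c₄
  simp only [LinearMap.comp_apply, hG1, map_add, map_sub, map_smul, hG2,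
    skewProj_contract_alt3 hG3 hG4 hωE]

end Composite

namespace IsSymAltContraction

variable {C : (E ⊗[ℂ] H) ⊗[ℂ] ExteriorAlgebra ℂ (E ⊗[ℂ] H) →ₗ[ℂ]
    (H ⊗[ℂ] (H ⊗[ℂ] H)) ⊗[ℂ] (E ⊗[ℂ] (E ⊗[ℂ] E))} (hC : IsSymAltContraction ωE ωH C)
include hC

/-- The terms contracting `c₀` match those on the right; the remaining ones cancel in pairs, since
both `ωH` and the first two arguments of `alt3` are skew. -/
theorem sum_exchange (hωH : ∀ u v, ωH u v = -ωH v u) (a₀ a₁ a₂ a₃ a₄ : E)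
    (c₀ c₁ c₂ c₃ c₄ : H) :
    C ((a₁ ⊗ₜ c₁) ⊗ₜ wedge4 (a₀ ⊗ₜ c₀) (a₂ ⊗ₜ c₂) (a₃ ⊗ₜ c₃) (a₄ ⊗ₜ c₄))
      - C ((a₂ ⊗ₜ c₂) ⊗ₜ wedge4 (a₀ ⊗ₜ c₀) (a₁ ⊗ₜ c₁) (a₃ ⊗ₜ c₃) (a₄ ⊗ₜ c₄))
      + C ((a₃ ⊗ₜ c₃) ⊗ₜ wedge4 (a₀ ⊗ₜ c₀) (a₁ ⊗ₜ c₁) (a₂ ⊗ₜ c₂) (a₄ ⊗ₜ c₄))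
      - C ((a₄ ⊗ₜ c₄) ⊗ₜ wedge4 (a₀ ⊗ₜ c₀) (a₁ ⊗ₜ c₁) (a₂ ⊗ₜ c₂) (a₃ ⊗ₜ c₃))
      = C ((a₀ ⊗ₜ c₀) ⊗ₜ wedge4 (a₁ ⊗ₜ c₁) (a₂ ⊗ₜ c₂) (a₃ ⊗ₜ c₃) (a₄ ⊗ₜ c₄)) := by
  have exchange (u v : H) (x y z : E) (s : H ⊗[ℂ] (H ⊗[ℂ] H)) :
      ωH v u • (s ⊗ₜ[ℂ] alt3 y x z) = ωH u v • (s ⊗ₜ[ℂ] alt3 x y z) := by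
    rw [hωH v u, alt3_swap x y, TensorProduct.tmul_neg, neg_smul_neg]
  simp only [hC _ _ _ _ _]
  rw [exchange c₀ c₁ a₀ a₁, exchange c₀ c₂ a₀ a₂, exchange c₀ c₃ a₀ a₃, exchange c₀ c₄ a₀ a₄,
    exchange c₁ c₂ a₁ a₂, exchange c₁ c₃ a₁ a₃, exchange c₁ c₄ a₁ a₄, exchange c₂ c₃ a₂ a₃,
    exchange c₂ c₄ a₂ a₄, exchange c₃ c₄ a₃ a₄]
  abel

variable [Fintype ι] [Fintype κ] [DecidableEq ι] [DecidableEq κ] {e te : ι → E} {f tf : κ → H}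
  (FE : IsDualFrame ωE e te) (FH : IsDualFrame ωH f tf)
include FE FH

theorem apply_interiorDual {B : E ⊗[ℂ] H →ₗ[ℂ] E ⊗[ℂ] H →ₗ[ℂ] ℂ}
    (hB : ∀ (a b : E) (c d : H), B (a ⊗ₜ c) (b ⊗ₜ d) = ωE a b * ωH c d)
    {ic : E ⊗[ℂ] H →ₗ[ℂ] ExteriorAlgebra ℂ (E ⊗[ℂ] H) →ₗ[ℂ] ExteriorAlgebra ℂ (E ⊗[ℂ] H)}
    (hic : IsInteriorProduct B ic) (p : E) (c : H) {α : ExteriorAlgebra ℂ (E ⊗[ℂ] H)}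
    (hα : α ∈ fourVectors (Submodule.span ℂ (Set.range e)) (Submodule.span ℂ (Set.range f))) :
    C (interiorDual e te f tf ic (p ⊗ₜ c) α) = C ((p ⊗ₜ c) ⊗ₜ α) := by
  refine LinearMap.eqOn_span (f := C ∘ₗ interiorDual e te f tf ic (p ⊗ₜ c))
    (g := C ∘ₗ TensorProduct.mk ℂ _ _ (p ⊗ₜ c)) ?_ hα
  rintro _ ⟨⟨a, d⟩, rfl⟩
  simp only [LinearMap.comp_apply, TensorProduct.mk_apply,
    interiorDual_wedge4 FE FH hB hic (p ⊗ₜ c) a d (fun _ => rfl), map_add, map_sub]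
  exact hC.sum_exchange FH.skew _ _ _ _ _ _ _ _ _ _

theorem apply_metricDual_Tcal (n : ℕ) {B : E ⊗[ℂ] H →ₗ[ℂ] E ⊗[ℂ] H →ₗ[ℂ] ℂ}
    (hB : ∀ (a b : E) (c d : H), B (a ⊗ₜ c) (b ⊗ₜ d) = ωE a b * ωH c d)
    {ic : E ⊗[ℂ] H →ₗ[ℂ] ExteriorAlgebra ℂ (E ⊗[ℂ] H) →ₗ[ℂ] ExteriorAlgebra ℂ (E ⊗[ℂ] H)}
    (hic : IsInteriorProduct B ic) {p : E} (hp : p ∈ Submodule.span ℂ (Set.range e))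
    {c : H} (hc : c ∈ Submodule.span ℂ (Set.range f)) {α : ExteriorAlgebra ℂ (E ⊗[ℂ] H)}
    (hα : α ∈ fourVectors (Submodule.span ℂ (Set.range e)) (Submodule.span ℂ (Set.range f))) :
    C (metricDual e te f tf (Tcal n B ic (p ⊗ₜ c) α))
      = C ((p ⊗ₜ c) ⊗ₜ α) - ((1 : ℂ) / (4 * n - 3)) •
        C (wedgeDual e te f tf (ic (p ⊗ₜ c) α)) := by
  have B_comm : B (p ⊗ₜ c) = B.flip (p ⊗ₜ c) := by
    ext b d
    simp [hB, FE.skew p b, FH.skew c d]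
  have pairing : C (metricDual e te f tf (fun X => B (p ⊗ₜ c) X • α)) = C ((p ⊗ₜ c) ⊗ₜ α) := by
    simp only [B_comm, LinearMap.flip_apply, metricDual_pairing_smul FE FH hB hp hc]
  simp only [metricDual_Tcal, map_add, map_sub, map_smul, pairing,
    hC.apply_interiorDual FE FH hB hic p c hα]
  module

theorem apply_wedgeDual_wedge3 {b₁ b₂ b₃ : E} {d₁ d₂ d₃ : H}
    (hb₁ : b₁ ∈ Submodule.span ℂ (Set.range e)) (hb₂ : b₂ ∈ Submodule.span ℂ (Set.range e))
    (hb₃ : b₃ ∈ Submodule.span ℂ (Set.range e)) (hd₁ : d₁ ∈ Submodule.span ℂ (Set.range f))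
    (hd₂ : d₂ ∈ Submodule.span ℂ (Set.range f)) (hd₃ : d₃ ∈ Submodule.span ℂ (Set.range f)) :
    C (wedgeDual e te f tf (wedge3 (b₁ ⊗ₜ d₁) (b₂ ⊗ₜ d₂) (b₃ ⊗ₜ d₃)))
      = sym3 d₁ d₂ d₃ ⊗ₜ (((Fintype.card κ : ℂ) + 1) • altTrace e te (contract3 ωE b₁ b₂ b₃)
          - (6 : ℂ) • alt3 b₁ b₂ b₃) := by
  have symSlot (d u v : H) (hd : d ∈ Submodule.span ℂ (Set.range f)) :
      ∑ k, ωH (tf k) d • sym3 (f k) u v = -sym3 d u v := by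
    simp only [FH.skew (tf _), neg_smul, Finset.sum_neg_distrib, sum_smul_sym3,
      FH.sum_apply_dual_smul hd]
  simp only [wedgeDual_apply, map_sum, ι_mul_wedge3, hC _ _ _ _ _, Finset.sum_add_distrib,
    Finset.sum_sub_distrib, sum_sum_smul_tmul, symSlot _ _ _ hd₁, symSlot _ _ _ hd₂,
    symSlot _ _ _ hd₃, ← Finset.sum_smul, FH.sum_apply_dual_self,
    FE.sum_dual_alt3_contract3 hb₁ hb₂, FE.sum_dual_alt3_contract3 hb₁ hb₃,
    FE.sum_dual_alt3_contract3 hb₂ hb₃]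
  rw [← Finset.smul_sum, ← TensorProduct.tmul_sum, sum_alt3_dual_self, altTrace_contract3,
    sym3_swap d₁ d₂ d₃, ← sym3_rotate d₃ d₁ d₂, alt3_swap b₁ b₂ b₃, ← alt3_rotate b₃ b₁ b₂]
  simp only [TensorProduct.tmul_sub, TensorProduct.tmul_add, TensorProduct.tmul_smul,
    TensorProduct.tmul_neg, TensorProduct.neg_tmul]
  module

end IsSymAltContraction

end SymAltContraction

section AlphaWedge

variable {E H ι : Type*} [AddCommGroup E] [Module ℂ E] [AddCommGroup H] [Module ℂ H] [Fintype ι]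

/-- The 4-vector `ah∧bh∧Σᵢ eᵢh̃∧ẽᵢh̃ − ah̃∧bh̃∧Σᵢ eᵢh∧ẽᵢh`, which is `α₀` for `a = e₁`, `b = e₂`. -/
noncomputable def alphaWedge (e te : ι → E) (h th : H) (a b : E) :
    ExteriorAlgebra ℂ (E ⊗[ℂ] H) :=
  (∑ i, wedge4 (a ⊗ₜ h) (b ⊗ₜ h) (e i ⊗ₜ th) (te i ⊗ₜ th))
    - ∑ i, wedge4 (a ⊗ₜ th) (b ⊗ₜ th) (e i ⊗ₜ h) (te i ⊗ₜ h)

theorem sum_smul_wedge3 (c : ι → ℂ) (x y : E ⊗[ℂ] H) (z : ι → E) (d : H) :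
    ∑ i, c i • wedge3 x y (z i ⊗ₜ d) = wedge3 x y ((∑ i, c i • z i) ⊗ₜ d) := by
  simp only [wedge3, TensorProduct.sum_tmul, ← TensorProduct.smul_tmul', map_sum, map_smul,
    Finset.mul_sum, mul_smul_comm]

variable [DecidableEq ι] {ωE : E →ₗ[ℂ] E →ₗ[ℂ] ℂ} {ωH : H →ₗ[ℂ] H →ₗ[ℂ] ℂ} {e te : ι → E}
  (FE : IsDualFrame ωE e te) {a b p : E} {h th : H}
include FE

theorem alphaWedge_mem_fourVectors (ha : a ∈ Submodule.span ℂ (Set.range e))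
    (hb : b ∈ Submodule.span ℂ (Set.range e)) {W : Submodule ℂ H} (hh : h ∈ W) (hth : th ∈ W) :
    alphaWedge e te h th a b ∈ fourVectors (Submodule.span ℂ (Set.range e)) W :=
  have he (i : ι) : e i ∈ Submodule.span ℂ (Set.range e) := Submodule.subset_span ⟨i, rfl⟩
  sub_mem
    (sum_mem fun i _ => wedge4_mem_fourVectors ha hb (he i) (FE.dual_mem_span i) hh hh hth hth)
    (sum_mem fun i _ => wedge4_mem_fourVectors ha hb (he i) (FE.dual_mem_span i) hth hth hh hh)

theorem interior_alphaWedge (hhth : ωH h th = 1) (hhh : ωH h h = 0)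
    {B : E ⊗[ℂ] H →ₗ[ℂ] E ⊗[ℂ] H →ₗ[ℂ] ℂ}
    (hB : ∀ (a b : E) (c d : H), B (a ⊗ₜ c) (b ⊗ₜ d) = ωE a b * ωH c d)
    {ic : E ⊗[ℂ] H →ₗ[ℂ] ExteriorAlgebra ℂ (E ⊗[ℂ] H) →ₗ[ℂ] ExteriorAlgebra ℂ (E ⊗[ℂ] H)}
    (hic : IsInteriorProduct B ic) (hp : p ∈ Submodule.span ℂ (Set.range e)) :
    ic (p ⊗ₜ h) (alphaWedge e te h th a b)
      = (-2 : ℂ) • wedge3 (a ⊗ₜ h) (b ⊗ₜ h) (p ⊗ₜ th)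
        - ωE p a • ∑ i, wedge3 (b ⊗ₜ th) (e i ⊗ₜ h) (te i ⊗ₜ h)
        + ωE p b • ∑ i, wedge3 (a ⊗ₜ th) (e i ⊗ₜ h) (te i ⊗ₜ h) := by
  simp only [alphaWedge, map_sub, map_sum, hic _ _ _ _ _, hB, hhth, hhh, mul_zero, mul_one,
    zero_smul, sub_zero, add_zero, zero_add, Finset.sum_sub_distrib, sum_smul_wedge3,
    FE.sum_apply_frame_smul_dual hp, FE.sum_apply_dual_smul hp, ← Finset.smul_sum]
  have wedge3_neg : wedge3 (a ⊗ₜ[ℂ] h) (b ⊗ₜ[ℂ] h) ((-p) ⊗ₜ[ℂ] th)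
      = -wedge3 (a ⊗ₜ[ℂ] h) (b ⊗ₜ[ℂ] h) (p ⊗ₜ[ℂ] th) := by
    simp only [wedge3, TensorProduct.neg_tmul, map_neg, mul_neg]
  rw [wedge3_neg]
  module

namespace IsSymAltContraction

variable {C : (E ⊗[ℂ] H) ⊗[ℂ] ExteriorAlgebra ℂ (E ⊗[ℂ] H) →ₗ[ℂ]
    (H ⊗[ℂ] (H ⊗[ℂ] H)) ⊗[ℂ] (E ⊗[ℂ] (E ⊗[ℂ] E))} (hC : IsSymAltContraction ωE ωH C)
include hC

theorem apply_tmul_alphaWedge (hhth : ωH h th = 1) (hhh : ωH h h = 0)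
    (ha : a ∈ Submodule.span ℂ (Set.range e)) (hb : b ∈ Submodule.span ℂ (Set.range e)) (p : E) :
    C ((p ⊗ₜ h) ⊗ₜ alphaWedge e te h th a b)
      = sym3 h h th ⊗ₜ ((2 * ωE a b) • altTrace e te p
          - (2 * Fintype.card ι : ℂ) • alt3 p a b) := by
  have trace (x y : E) (hy : y ∈ Submodule.span ℂ (Set.range e)) :
      ∑ i, alt3 p x (contract3 ωE y (e i) (te i))
        = ((Fintype.card ι : ℂ) - 2) • alt3 p x y := by
    rw [← alt3_sum, FE.sum_contract3 hy, alt3_smul]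
  simp only [alphaWedge, TensorProduct.tmul_sub, TensorProduct.tmul_sum, map_sub, map_sum,
    hC _ _ _ _ _, hhth, hhh, zero_smul, one_smul, sub_zero, add_zero, zero_add,
    Finset.sum_sub_distrib]
  simp only [← TensorProduct.tmul_sum, FE.sum_alt3_contract3_dual ha hb p,
    FE.sum_alt3_dual_contract3 ha hb p, trace _ _ ha, trace _ _ hb]
  rw [sym3_rotate h th h, sym3_rotate h h th, ← alt3_rotate p b a, alt3_swap a b p,
    alt3_rotate p a b, smul_neg]
  simp only [TensorProduct.tmul_sub, TensorProduct.tmul_smul, TensorProduct.tmul_neg]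
  module

variable {κ : Type*} [Fintype κ] [DecidableEq κ] {f tf : κ → H} (FH : IsDualFrame ωH f tf)
include FH

theorem apply_wedgeDual_sum_wedge3 (hb : b ∈ Submodule.span ℂ (Set.range e))
    (hh : h ∈ Submodule.span ℂ (Set.range f)) (hth : th ∈ Submodule.span ℂ (Set.range f)) :
    C (wedgeDual e te f tf (∑ i, wedge3 (b ⊗ₜ th) (e i ⊗ₜ h) (te i ⊗ₜ h)))
      = ((Fintype.card κ + 1 : ℂ) * (Fintype.card ι - 2) - 6) •
          (sym3 h h th ⊗ₜ altTrace e te b) := by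
  have he (i : ι) : e i ∈ Submodule.span ℂ (Set.range e) := Submodule.subset_span ⟨i, rfl⟩
  simp only [map_sum, hC.apply_wedgeDual_wedge3 FE FH hb (he _) (FE.dual_mem_span _) hth hh hh,
    ← TensorProduct.tmul_sum, Finset.sum_sub_distrib, ← Finset.smul_sum, ← altTrace_sum,
    FE.sum_contract3 hb, altTrace_smul, sum_alt3_self_dual]
  rw [sym3_rotate h th h, sym3_rotate h h th]
  simp only [TensorProduct.tmul_sub, TensorProduct.tmul_smul]
  module

theorem apply_wedgeDual_interior_alphaWedge (hhth : ωH h th = 1) (hhh : ωH h h = 0)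
    {B : E ⊗[ℂ] H →ₗ[ℂ] E ⊗[ℂ] H →ₗ[ℂ] ℂ}
    (hB : ∀ (a b : E) (c d : H), B (a ⊗ₜ c) (b ⊗ₜ d) = ωE a b * ωH c d)
    {ic : E ⊗[ℂ] H →ₗ[ℂ] ExteriorAlgebra ℂ (E ⊗[ℂ] H) →ₗ[ℂ] ExteriorAlgebra ℂ (E ⊗[ℂ] H)}
    (hic : IsInteriorProduct B ic) (ha : a ∈ Submodule.span ℂ (Set.range e))
    (hb : b ∈ Submodule.span ℂ (Set.range e)) (hp : p ∈ Submodule.span ℂ (Set.range e))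
    (hh : h ∈ Submodule.span ℂ (Set.range f)) (hth : th ∈ Submodule.span ℂ (Set.range f)) :
    C (wedgeDual e te f tf (ic (p ⊗ₜ h) (alphaWedge e te h th a b)))
      = sym3 h h th ⊗ₜ ((12 : ℂ) • alt3 a b p
          - (2 * (Fintype.card κ + 1) * ωE a b : ℂ) • altTrace e te p
          + ((Fintype.card κ + 1 : ℂ) * Fintype.card ι - 6) •
            (ωE p b • altTrace e te a - ωE p a • altTrace e te b)) := by
  rw [interior_alphaWedge FE hhth hhh hB hic hp]
  simp only [map_add, map_sub, map_smul, hC.apply_wedgeDual_wedge3 FE FH ha hb hp hh hh hth,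
    hC.apply_wedgeDual_sum_wedge3 FE FH ha hh hth, hC.apply_wedgeDual_sum_wedge3 FE FH hb hh hth,
    altTrace_contract3, FE.skew a p, FE.skew b p, TensorProduct.tmul_sub, TensorProduct.tmul_add,
    TensorProduct.tmul_smul]
  module

theorem apply_metricDual_Tcal_alphaWedge (n : ℕ) (hhth : ωH h th = 1) (hhh : ωH h h = 0)
    {B : E ⊗[ℂ] H →ₗ[ℂ] E ⊗[ℂ] H →ₗ[ℂ] ℂ}
    (hB : ∀ (a b : E) (c d : H), B (a ⊗ₜ c) (b ⊗ₜ d) = ωE a b * ωH c d)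
    {ic : E ⊗[ℂ] H →ₗ[ℂ] ExteriorAlgebra ℂ (E ⊗[ℂ] H) →ₗ[ℂ] ExteriorAlgebra ℂ (E ⊗[ℂ] H)}
    (hic : IsInteriorProduct B ic) (ha : a ∈ Submodule.span ℂ (Set.range e))
    (hb : b ∈ Submodule.span ℂ (Set.range e)) (hp : p ∈ Submodule.span ℂ (Set.range e))
    (hh : h ∈ Submodule.span ℂ (Set.range f)) (hth : th ∈ Submodule.span ℂ (Set.range f))
    (hab : ωE a b = 0) (hap : ωE a p = 1) (hbp : ωE b p = 0) :
    C (metricDual e te f tf (Tcal n B ic (p ⊗ₜ h) (alphaWedge e te h th a b)))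
      = -((1 : ℂ) / (4 * n - 3) * ((Fintype.card κ + 1) * Fintype.card ι - 6)) •
          (sym3 h h th ⊗ₜ altTrace e te b)
        + (-(2 * Fintype.card ι + (1 : ℂ) / (4 * n - 3) * 12)) • (sym3 h h th ⊗ₜ alt3 a b p) := by
  have hpa : ωE p a = -1 := by rw [FE.skew, hap]
  have hpb : ωE p b = 0 := by rw [FE.skew, hbp, neg_zero]
  rw [hC.apply_metricDual_Tcal FE FH n hB hic hp hh (alphaWedge_mem_fourVectors FE ha hb hh hth),
    hC.apply_tmul_alphaWedge FE hhth hhh ha hb,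
    hC.apply_wedgeDual_interior_alphaWedge FE FH hhth hhh hB hic ha hb hp hh hth,
    hab, hpa, hpb, ← alt3_rotate p a b]
  simp only [TensorProduct.tmul_sub, TensorProduct.tmul_add, TensorProduct.tmul_smul]
  module

end IsSymAltContraction

end AlphaWedge

section UnitaryBases

theorem isDualFrame_sum {E ι : Type*} [AddCommGroup E] [Module ℂ E] [DecidableEq ι]
    {ω : E →ₗ[ℂ] E →ₗ[ℂ] ℂ} (hω : ∀ u v, ω u v = -ω v u) {e te : ι ⊕ ι → E}
    (hinl : ∀ i, te (Sum.inl i) = e (Sum.inr i)) (hinr : ∀ i, te (Sum.inr i) = -e (Sum.inl i))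
    (hunit : ∀ i j, ω (e i) (te j) = if i = j then 1 else 0) : IsDualFrame ω e te where
  skew := hω
  apply_dual := hunit
  span_dual := by
    apply le_antisymm <;> rw [Submodule.span_le] <;> rintro _ ⟨i | i, rfl⟩
    · exact Submodule.subset_span ⟨Sum.inr i, (hinl i).symm⟩
    · exact hinr i ▸ neg_mem (Submodule.subset_span ⟨Sum.inl i, rfl⟩)
    · rw [← neg_neg (e _), ← hinr i]
      exact neg_mem (Submodule.subset_span ⟨Sum.inr i, rfl⟩)
    · exact Submodule.subset_span ⟨Sum.inl i, hinl i⟩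

theorem apply_inl_inl_eq_zero {E ι : Type*} [AddCommGroup E] [Module ℂ E] [DecidableEq ι]
    {ω : E →ₗ[ℂ] E →ₗ[ℂ] ℂ} {e te : ι ⊕ ι → E} (hinr : ∀ i, te (Sum.inr i) = -e (Sum.inl i))
    (hunit : ∀ i j, ω (e i) (te j) = if i = j then 1 else 0) (i j : ι) :
    ω (e (Sum.inl i)) (e (Sum.inl j)) = 0 := by
  simpa [hinr] using hunit (Sum.inl i) (Sum.inr j)

theorem isDualFrame_pair {H : Type*} [AddCommGroup H] [Module ℂ H] {ω : H →ₗ[ℂ] H →ₗ[ℂ] ℂ}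
    (hω : ∀ u v, ω u v = -ω v u) {h th : H} (hhth : ω h th = 1) (hhh : ω h h = 0)
    (hthth : ω th th = 0) : IsDualFrame ω ![h, th] ![th, -h] where
  skew := hω
  apply_dual i j := by
    fin_cases i <;> fin_cases j <;> simp [hhth, hhh, hthth, hω th h]
  span_dual := by
    simp only [Matrix.range_cons, Matrix.range_empty, Set.union_empty, Set.singleton_union]
    rw [Set.pair_comm h th, Submodule.span_insert, Submodule.span_insert, ← Set.neg_singleton,
      Submodule.span_neg]

theorem Xi_eq_metricDual (n : ℕ) {E H : Type*} [AddCommGroup E] [Module ℂ E] [AddCommGroup H]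
    [Module ℂ H] (e te : Fin n ⊕ Fin n → E) (h th : H)
    (B : E ⊗[ℂ] H →ₗ[ℂ] E ⊗[ℂ] H →ₗ[ℂ] ℂ)
    (ic : E ⊗[ℂ] H →ₗ[ℂ] ExteriorAlgebra ℂ (E ⊗[ℂ] H) →ₗ[ℂ] ExteriorAlgebra ℂ (E ⊗[ℂ] H))
    (γ : E ⊗[ℂ] H) (α : ExteriorAlgebra ℂ (E ⊗[ℂ] H)) :
    Xi n e te h th B ic γ α = metricDual e te ![h, th] ![th, -h] (Tcal n B ic γ α) := by
  simp [Xi, metricDual_apply, Fin.sum_univ_two, TensorProduct.tmul_neg, TensorProduct.neg_tmul,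
    sub_eq_add_neg]

end UnitaryBases

set_option maxHeartbeats 2000000 in
/-- the projection to `S³H⊗Λ³E` of `ω_E• sym^H(ω_H•𝒯(γ₀⊗α₀))`
equals `−(6(n−1)/(4n−3)) sym^H(hhh̃)⊗(Σᵢ eᵢ∧ẽᵢ∧e₂) − (4(4n²−3n+3)/(4n−3))
sym^H(hhh̃)⊗(e₁∧e₂∧ẽ₁)`.  Conventions as in Statements 11–13; `G1` is the
`ω_H`-contraction of the first two `H`-variables, `G2` the expansion of `Λ³T`
followed by total symmetrization in the `H`-variables, `G3` the `ω_E`-contraction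
on `Λ³E`, and `G4` the final skew-symmetrization of the three `E`-variables. -/
theorem statement_14
    (n : ℕ) (hn : 2 ≤ n)
    (E H : Type*) [AddCommGroup E] [Module ℂ E] [AddCommGroup H] [Module ℂ H]
    (ωE : E →ₗ[ℂ] E →ₗ[ℂ] ℂ) (hωEskew : ∀ u v : E, ωE u v = - ωE v u)
    (ωH : H →ₗ[ℂ] H →ₗ[ℂ] ℂ) (hωHskew : ∀ u v : H, ωH u v = - ωH v u)
    (e te : Fin n ⊕ Fin n → E)
    (hte1 : ∀ i : Fin n, te (Sum.inl i) = e (Sum.inr i))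
    (hte2 : ∀ i : Fin n, te (Sum.inr i) = - e (Sum.inl i))
    (hunit : ∀ i j : Fin n ⊕ Fin n, ωE (e i) (te j) = if i = j then 1 else 0)
    (h th : H) (hH1 : ωH h th = 1) (hH2 : ωH h h = 0) (hH3 : ωH th th = 0)
    (B : E ⊗[ℂ] H →ₗ[ℂ] E ⊗[ℂ] H →ₗ[ℂ] ℂ)
    (hB : ∀ (a b : E) (c d : H), B (a ⊗ₜ c) (b ⊗ₜ d) = ωE a b * ωH c d)
    (ic : E ⊗[ℂ] H →ₗ[ℂ]
      ExteriorAlgebra ℂ (E ⊗[ℂ] H) →ₗ[ℂ] ExteriorAlgebra ℂ (E ⊗[ℂ] H))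
    (hic : ∀ γ x₁ x₂ x₃ x₄ : E ⊗[ℂ] H,
      ic γ (wedge4 x₁ x₂ x₃ x₄)
        = B γ x₁ • wedge3 x₂ x₃ x₄ - B γ x₂ • wedge3 x₁ x₃ x₄
          + B γ x₃ • wedge3 x₁ x₂ x₄ - B γ x₄ • wedge3 x₁ x₂ x₃)
    -- ω_H-contraction of the form slot with the first H-variable of Λ⁴T
    (G1 : (E ⊗[ℂ] H) ⊗[ℂ] ExteriorAlgebra ℂ (E ⊗[ℂ] H) →ₗ[ℂ]
      E ⊗[ℂ] (E ⊗[ℂ] ExteriorAlgebra ℂ (E ⊗[ℂ] H)))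
    (hG1 : ∀ (a₀ a₁ a₂ a₃ a₄ : E) (c₀ c₁ c₂ c₃ c₄ : H),
      G1 ((a₀ ⊗ₜ c₀) ⊗ₜ wedge4 (a₁ ⊗ₜ c₁) (a₂ ⊗ₜ c₂) (a₃ ⊗ₜ c₃) (a₄ ⊗ₜ c₄))
        = ωH c₀ c₁ • (a₀ ⊗ₜ (a₁ ⊗ₜ wedge3 (a₂ ⊗ₜ c₂) (a₃ ⊗ₜ c₃) (a₄ ⊗ₜ c₄)))
        - ωH c₀ c₂ • (a₀ ⊗ₜ (a₂ ⊗ₜ wedge3 (a₁ ⊗ₜ c₁) (a₃ ⊗ₜ c₃) (a₄ ⊗ₜ c₄)))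
        + ωH c₀ c₃ • (a₀ ⊗ₜ (a₃ ⊗ₜ wedge3 (a₁ ⊗ₜ c₁) (a₂ ⊗ₜ c₂) (a₄ ⊗ₜ c₄)))
        - ωH c₀ c₄ • (a₀ ⊗ₜ (a₄ ⊗ₜ wedge3 (a₁ ⊗ₜ c₁) (a₂ ⊗ₜ c₂) (a₃ ⊗ₜ c₃))))
    -- expansion of Λ³T ⊂ HHH⊗EEE followed by total symmetrization in the H-variables
    (G2 : E ⊗[ℂ] (E ⊗[ℂ] ExteriorAlgebra ℂ (E ⊗[ℂ] H)) →ₗ[ℂ]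
      E ⊗[ℂ] (E ⊗[ℂ] ((H ⊗[ℂ] (H ⊗[ℂ] H)) ⊗[ℂ] (E ⊗[ℂ] (E ⊗[ℂ] E)))))
    (hG2 : ∀ (a a' b₁ b₂ b₃ : E) (d₁ d₂ d₃ : H),
      G2 (a ⊗ₜ (a' ⊗ₜ wedge3 (b₁ ⊗ₜ d₁) (b₂ ⊗ₜ d₂) (b₃ ⊗ₜ d₃)))
        = a ⊗ₜ (a' ⊗ₜ (sym3 d₁ d₂ d₃ ⊗ₜ alt3 b₁ b₂ b₃)))
    -- contraction with ω_E on the Λ³E-part, leaving the first two E-variables unchanged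
    (G3 : E ⊗[ℂ] (E ⊗[ℂ] ((H ⊗[ℂ] (H ⊗[ℂ] H)) ⊗[ℂ] (E ⊗[ℂ] (E ⊗[ℂ] E)))) →ₗ[ℂ]
      E ⊗[ℂ] (E ⊗[ℂ] ((H ⊗[ℂ] (H ⊗[ℂ] H)) ⊗[ℂ] E)))
    (hG3 : ∀ (a a' x y z : E) (u v w : H),
      G3 (a ⊗ₜ (a' ⊗ₜ ((u ⊗ₜ (v ⊗ₜ w)) ⊗ₜ (x ⊗ₜ (y ⊗ₜ z)))))
        = a ⊗ₜ (a' ⊗ₜ ((u ⊗ₜ (v ⊗ₜ w)) ⊗ₜ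
            (ωE x y • z - ωE x z • y + ωE y z • x))))
    -- projection to (S³H)Λ³E: total antisymmetrization of the three E-variables
    (G4 : E ⊗[ℂ] (E ⊗[ℂ] ((H ⊗[ℂ] (H ⊗[ℂ] H)) ⊗[ℂ] E)) →ₗ[ℂ]
      (H ⊗[ℂ] (H ⊗[ℂ] H)) ⊗[ℂ] (E ⊗[ℂ] (E ⊗[ℂ] E)))
    (hG4 : ∀ (a a' z : E) (u v w : H),
      G4 (a ⊗ₜ (a' ⊗ₜ ((u ⊗ₜ (v ⊗ₜ w)) ⊗ₜ z)))
        = (u ⊗ₜ (v ⊗ₜ w)) ⊗ₜ (((1:ℂ)/6) • alt3 a a' z))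
    :
    G4 (G3 (G2 (G1
        (Xi n e te h th B ic (te (Sum.inl ⟨0, by omega⟩) ⊗ₜ h)
          (alpha0 n hn e te h th)))))
      = (-(6*((n:ℂ)-1))/(4*n-3)) •
          ∑ i : Fin n ⊕ Fin n,
            (sym3 h h th ⊗ₜ alt3 (e i) (te i) (e (Sum.inl ⟨1, by omega⟩)))
        + (-(4*(4*(n:ℂ)^2-3*n+3))/(4*n-3)) •
            (sym3 h h th ⊗ₜ alt3 (e (Sum.inl ⟨0, by omega⟩))
              (e (Sum.inl ⟨1, by omega⟩)) (te (Sum.inl ⟨0, by omega⟩))) := by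
  have FE := isDualFrame_sum hωEskew hte1 hte2 hunit
  have FH := isDualFrame_pair hωHskew hH1 hH2 hH3
  have hC := isSymAltContraction_comp hG3 hG4 hωEskew hG1 hG2
  have he (i) : e i ∈ Submodule.span ℂ (Set.range e) := Submodule.subset_span ⟨i, rfl⟩
  have hh : h ∈ Submodule.span ℂ (Set.range ![h, th]) := Submodule.subset_span ⟨0, rfl⟩
  have hth : th ∈ Submodule.span ℂ (Set.range ![h, th]) := Submodule.subset_span ⟨1, rfl⟩
  have he₁e₂ := apply_inl_inl_eq_zero hte2 hunit ⟨0, by omega⟩ ⟨1, by omega⟩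
  have image := hC.apply_metricDual_Tcal_alphaWedge FE FH n hH1 hH2 hB hic (he _) (he _)
    (FE.dual_mem_span (Sum.inl ⟨0, by omega⟩)) hh hth he₁e₂ (by simp [hunit]) (by simp [hunit])
  have hdenom : (n * 4 - 3 : ℂ) ≠ 0 := sub_ne_zero.mpr (by exact_mod_cast (by omega : n * 4 ≠ 3))
  rw [Xi_eq_metricDual, ← TensorProduct.tmul_sum]
  refine image.trans ?_
  congr 2 <;> simp only [Fintype.card_sum, Fintype.card_fin, Nat.cast_add] <;> field_simp <;> ring
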